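/- arXiv:2302.07712 — 2 statements merged into one kernel-verified Lean document; each statement's English description precedes it below -/
import Mathlib

section
/- Let X ∈ ℝ^{d×n} and let {u^k} ⊂ ℝ^d with ‖u^k‖ = 1 be generated by the K = 1 non-greedy algorithm: s^k = sgn(Xᵀu^k) entrywise and u^{k+1} = Xs^k/‖Xs^k‖, with an initializer u⁰ satisfying Xᵀu⁰ ≠ 0. Then Xs^k ≠ 0 for every k (so the iteration is well defined; indeed ‖Xs^k‖ ≥ ‖Xᵀu⁰‖₁ > 0), there exists k₀ such that u^k = u^{k₀} for all k ≥ k₀, and the stopping point u* = u^{k₀} is a FOC point: there exists s* ∈ ℝ^n with s*_i = sgn(x_iᵀu*) whenever x_iᵀu* ≠ 0 and s*_i ∈ [−1,1] otherwise, such that Xs* = h·u* for some h ≥ 0. -/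
/-!
Write `f u = ‖Xᵀu‖₁` and `N k = ‖X s^k‖`. Since `s^k` is the sign pattern of `Xᵀu^k`,
`f (u^k) = ⟨X s^k, u^k⟩ ≤ N k` by Cauchy–Schwarz, and since `u^{k+1}` is the direction of `X s^k`,
`N k = ⟨X s^k, u^{k+1}⟩ = ⟨s^k, Xᵀu^{k+1}⟩ ≤ f (u^{k+1})` because the entries of `s^k` lie in `[-1, 1]`.
Hence `f (u^k) ≤ N k ≤ f (u^{k+1}) ≤ N (k+1)`, which gives the lower bound on `N`. The sequence `N` is
monotone and takes finitely many values, as `s^k ∈ {-1, 0, 1}ⁿ`, so it is eventually constant. From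
then on Cauchy–Schwarz is an equality, which forces `X s^k = N k • u^k`: this says both
that `u^{k+1} = u^k` and that `u^k` is a first-order critical point, with `s* = s^k`.
-/
open Matrix

noncomputable section

/-- Euclidean norm of a real vector. -/
def euclNorm {m : ℕ} (v : Fin m → ℝ) : ℝ := Real.sqrt (∑ i, v i ^ 2)

/-- L1 norm of a real vector. -/
def l1Norm {m : ℕ} (v : Fin m → ℝ) : ℝ := ∑ i, |v i|


private lemma euclNorm_nonneg {m : ℕ} (v : Fin m → ℝ) : 0 ≤ euclNorm v := Real.sqrt_nonneg _

private lemma euclNorm_sq {m : ℕ} (v : Fin m → ℝ) : euclNorm v ^ 2 = v ⬝ᵥ v := by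
  rw [euclNorm, Real.sq_sqrt (Finset.sum_nonneg fun i _ => sq_nonneg _)]
  simp [dotProduct, sq]

private lemma dotProduct_le_euclNorm {m : ℕ} (w u : Fin m → ℝ) (hu : euclNorm u = 1) :
    w ⬝ᵥ u ≤ euclNorm w := by
  refine Real.le_sqrt_of_sq_le ?_
  have h := Finset.sum_mul_sq_le_sq_mul_sq Finset.univ w u
  have h1 := euclNorm_sq u
  rw [hu] at h1
  have h2 : ∑ i, u i ^ 2 = 1 := by
    simpa [dotProduct, sq] using h1.symm
  rwa [h2, mul_one] at h

/-- The equality case of Cauchy–Schwarz for a unit vector `u`. -/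
private lemma eq_smul_of_euclNorm_le_dotProduct {m : ℕ} (w u : Fin m → ℝ) (hu : euclNorm u = 1)
    (h : euclNorm w ≤ w ⬝ᵥ u) : w = euclNorm w • u := by
  have h1 := euclNorm_sq u
  have h2 := euclNorm_sq w
  have h3 := euclNorm_nonneg w
  rw [hu] at h1
  -- `‖w - ‖w‖ u‖² = 2 ‖w‖ (‖w‖ - ⟨w, u⟩) ≤ 0`
  have h4 : (w - euclNorm w • u) ⬝ᵥ (w - euclNorm w • u) ≤ 0 := by
    simp only [sub_dotProduct, dotProduct_sub, smul_dotProduct, dotProduct_smul, smul_eq_mul,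
      dotProduct_comm u w, ← h1, ← h2]
    nlinarith
  have h5 : (w - euclNorm w • u) ⬝ᵥ (w - euclNorm w • u) = 0 :=
    le_antisymm h4 (by rw [← euclNorm_sq]; positivity)
  exact sub_eq_zero.mp (dotProduct_self_eq_zero.mp h5)

private lemma sign_mem (x : ℝ) : Real.sign x ∈ ({-1, 0, 1} : Set ℝ) := by
  rcases Real.sign_apply_eq x with h | h | h <;> simp [h]

private lemma abs_sign_le_one (x : ℝ) : |Real.sign x| ≤ 1 := by
  rcases Real.sign_apply_eq x with h | h | h <;> simp [h]

private lemma sign_dotProduct_eq_l1Norm {n : ℕ} (v : Fin n → ℝ) :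
    (fun i => Real.sign (v i)) ⬝ᵥ v = l1Norm v := by
  refine Finset.sum_congr rfl fun i _ => ?_
  rcases lt_trichotomy (v i) 0 with h | h | h
  · simp [Real.sign_of_neg h, abs_of_neg h]
  · simp [h]
  · simp [Real.sign_of_pos h, abs_of_pos h]

private lemma dotProduct_le_l1Norm {n : ℕ} (s v : Fin n → ℝ) (hs : ∀ i, |s i| ≤ 1) :
    s ⬝ᵥ v ≤ l1Norm v := by
  refine Finset.sum_le_sum fun i _ => (le_abs_self _).trans ?_
  rw [abs_mul]
  exact mul_le_of_le_one_left (abs_nonneg _) (hs i)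

private lemma mulVec_dotProduct_eq {d n : ℕ} (X : Matrix (Fin d) (Fin n) ℝ) (s : Fin n → ℝ)
    (u : Fin d → ℝ) : X.mulVec s ⬝ᵥ u = s ⬝ᵥ Xᵀ.mulVec u := by
  rw [dotProduct_comm, dotProduct_mulVec, mulVec_transpose, dotProduct_comm]

/-- finite-step convergence of the K = 1 non-greedy algorithm for
L1-norm PCA without any rank assumption (Theorem 3.5). -/
theorem nga_K1_finite_step_convergence {d n : ℕ}
    (X : Matrix (Fin d) (Fin n) ℝ)
    (u : ℕ → Fin d → ℝ) (s : ℕ → Fin n → ℝ)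
    (hnorm : ∀ k, euclNorm (u k) = 1)
    (hs : ∀ k, s k = fun i => Real.sign (Xᵀ.mulVec (u k) i))
    (h0 : Xᵀ.mulVec (u 0) ≠ 0)
    (hu : ∀ k, u (k + 1) = (euclNorm (X.mulVec (s k)))⁻¹ • X.mulVec (s k)) :
    (∀ k, X.mulVec (s k) ≠ 0 ∧
      0 < l1Norm (Xᵀ.mulVec (u 0)) ∧
      l1Norm (Xᵀ.mulVec (u 0)) ≤ euclNorm (X.mulVec (s k))) ∧
    ∃ k₀ : ℕ, (∀ k, k₀ ≤ k → u k = u k₀) ∧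
      ∃ sstar : Fin n → ℝ,
        (∀ i, (Xᵀ.mulVec (u k₀) i ≠ 0 → sstar i = Real.sign (Xᵀ.mulVec (u k₀) i)) ∧
          sstar i ∈ Set.Icc (-1 : ℝ) 1) ∧
        ∃ h : ℝ, 0 ≤ h ∧ X.mulVec sstar = h • u k₀ := by
  set N : ℕ → ℝ := fun k => euclNorm (X.mulVec (s k)) with hN
  have hsabs : ∀ k i, |s k i| ≤ 1 := fun k i => by rw [hs k]; exact abs_sign_le_one _
  have hf : ∀ k, X.mulVec (s k) ⬝ᵥ u k = l1Norm (Xᵀ.mulVec (u k)) := fun k => by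
    rw [mulVec_dotProduct_eq, hs k, sign_dotProduct_eq_l1Norm]
  have hfN : ∀ k, l1Norm (Xᵀ.mulVec (u k)) ≤ N k := fun k => by
    rw [← hf k]; exact dotProduct_le_euclNorm _ _ (hnorm k)
  have hNf : ∀ k, N k ≤ l1Norm (Xᵀ.mulVec (u (k + 1))) := fun k => by
    refine le_trans (le_of_eq ?_)
      (dotProduct_le_l1Norm (s k) (Xᵀ.mulVec (u (k + 1))) (hsabs k))
    -- also valid when `N k = 0`, with `0⁻¹ = 0`
    rw [← mulVec_dotProduct_eq, hu k, dotProduct_smul, ← euclNorm_sq, smul_eq_mul, sq,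
      ← mul_assoc, inv_mul_mul_self]
  have hmono : Monotone N := monotone_nat_of_le_succ fun k => (hNf k).trans (hfN (k + 1))
  have hpos : 0 < l1Norm (Xᵀ.mulVec (u 0)) := by
    obtain ⟨i, hi⟩ := Function.ne_iff.mp h0
    exact Finset.sum_pos' (fun j _ => abs_nonneg _) ⟨i, Finset.mem_univ i, abs_pos.mpr hi⟩
  have hlow : ∀ k, l1Norm (Xᵀ.mulVec (u 0)) ≤ N k := fun k =>
    (hfN 0).trans (hmono (Nat.zero_le k))
  have hNpos : ∀ k, 0 < N k := fun k => hpos.trans_le (hlow k)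
  refine ⟨fun k => ⟨fun h => ?_, hpos, hlow k⟩, ?_⟩
  · have := hNpos k
    simp [hN, h, euclNorm] at this
  -- `N` factors through the finitely many sign patterns, so it attains its maximum
  have hfin : (Set.range N).Finite := by
    have hpat : (Set.univ.pi fun _ : Fin n => ({-1, 0, 1} : Set ℝ)).Finite :=
      Set.Finite.pi fun _ => Set.toFinite _
    refine (hpat.image fun t => euclNorm (X.mulVec t)).subset ?_
    rintro _ ⟨k, rfl⟩
    refine ⟨s k, fun i _ => ?_, rfl⟩
    rw [hs k]
    exact sign_mem _
  obtain ⟨_, ⟨m, rfl⟩, hm⟩ := Set.exists_max_image _ id hfin (Set.range_nonempty N)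
  have hmax : ∀ k, N k ≤ N m := fun k => hm _ ⟨k, rfl⟩
  have hfix : ∀ k, m + 1 ≤ k → X.mulVec (s k) = N k • u k := by
    intro k hk
    obtain ⟨j, rfl⟩ : ∃ j, k = j + 1 := ⟨k - 1, by omega⟩
    refine eq_smul_of_euclNorm_le_dotProduct _ _ (hnorm _) ?_
    rw [hf]
    exact (hmax (j + 1)).trans ((hmono (by omega)).trans (hNf j))
  refine ⟨m + 1, fun k hk => ?_, s (m + 1), fun i => ⟨fun _ => ?_, ?_⟩, N (m + 1),
    (hNpos _).le, hfix _ le_rfl⟩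
  · induction k, hk using Nat.le_induction with
    | base => rfl
    | succ k hk ih =>
      rw [← ih, hu k]
      change (N k)⁻¹ • _ = _
      rw [hfix k hk, smul_smul, inv_mul_cancel₀ (hNpos k).ne', one_smul]
  · rw [hs]
  · exact abs_le.mp (hsabs _ i)
end
end

section
/- Let X ∈ ℝ^{d×n}, d ≥ K ≥ 1, and let {(U^k, S^k)} be generated by the non-greedy algorithm under a fixed deterministic PD-selection: S^k = sgn(XᵀU^k) entrywise and U^{k+1} = p(XS^k), where p assigns to each matrix C ∈ ℝ^{d×K} a fixed U-factor p(C) ∈ St(d,K) of a polar decomposition of C. Assume F(U⁰,S⁰) = ⟨XᵀU⁰, S⁰⟩ > 0. Then there exists a constant τ₀ > 0 such that: the objective value F(U^k,S^k) = ⟨XᵀU^k, S^k⟩ is the same for all k ≥ ⌈F^max/τ₀⌉ (where F^max = max_{U ∈ St(d,K)} ‖XᵀU‖₁), and for every k before the objective value stops increasing, F(U^{k+1},S^{k+1}) − F(U^k,S^k) ≥ τ₀. -/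
/-!
The objective values `f k = ⟨Xᵀ U k, S k⟩` form a nondecreasing sequence: `p (X * S k)` maximizes
`W ↦ ⟨Xᵀ W, S k⟩` over the Stiefel manifold (`trace_le_of_isUFactor`), and `sgn V` maximizes
`T ↦ ⟨V, T⟩` over sign matrices (`frobInner_le_entryL1`). Moreover `f (k + 1)`
is a function of the sign matrix `S k`, and there are only finitely many sign matrices, so `f` takes
finitely many values and is constant from some index `N` on (`eventually_const_of_finite_range`).

Only finitely many increments of `f` are therefore nonzero, so the positive ones have a positive
lower bound `τ`. Since `F^max ≥ f 0 > 0`, the constant `τ₀ = min τ (F^max / (N + 1))` is positive,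
bounds every nonzero increment from below, and satisfies `F^max / τ₀ ≥ N + 1`.
-/

open Matrix

noncomputable section

/-- The Stiefel manifold St(m,n): real m×n matrices with orthonormal columns. -/
def Stiefel (m n : ℕ) : Set (Matrix (Fin m) (Fin n) ℝ) := {U | Uᵀ * U = 1}

/-- Frobenius inner product ⟨A,B⟩ = trace(AᵀB). -/
def frobInner {m n : ℕ} (A B : Matrix (Fin m) (Fin n) ℝ) : ℝ := (Aᵀ * B).trace

/-- Frobenius norm. -/
def frobNorm {m n : ℕ} (A : Matrix (Fin m) (Fin n) ℝ) : ℝ := Real.sqrt (frobInner A A)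

/-- Entrywise L1 norm of a matrix. -/
def entryL1 {m n : ℕ} (A : Matrix (Fin m) (Fin n) ℝ) : ℝ := ∑ i, ∑ j, |A i j|

/-- Entrywise sign of a matrix. -/
def sgnMatrix {m n : ℕ} (A : Matrix (Fin m) (Fin n) ℝ) : Matrix (Fin m) (Fin n) ℝ :=
  Matrix.of fun i j => Real.sign (A i j)

/-- `U` is a U-factor of a polar decomposition of `C`: U ∈ St(m,n) and C = U*H with H
symmetric positive semidefinite. -/
def IsUFactor {m n : ℕ} (U C : Matrix (Fin m) (Fin n) ℝ) : Prop :=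
  U ∈ Stiefel m n ∧ ∃ H : Matrix (Fin n) (Fin n) ℝ, H.PosSemidef ∧ C = U * H

/-- `S` is an entrywise subgradient sign matrix for `V`: S_ij = sgn(V_ij) whenever
V_ij ≠ 0 and S_ij ∈ [-1,1] otherwise. -/
def IsSignSubgrad {m n : ℕ} (S V : Matrix (Fin m) (Fin n) ℝ) : Prop :=
  ∀ i j, (V i j ≠ 0 → S i j = Real.sign (V i j)) ∧ S i j ∈ Set.Icc (-1 : ℝ) 1

/-- A U-factor `P` of `C` maximizes `W ↦ tr(Wᵀ C)` over the Stiefel manifold: writing `C = P H`,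
the inequality is `0 ≤ tr((W - P) H (W - P)ᵀ) = 2 tr(H) - 2 tr(Wᵀ P H)`. -/
theorem trace_le_of_isUFactor {d K : ℕ} {W P C : Matrix (Fin d) (Fin K) ℝ}
    (hW : W ∈ Stiefel d K) (hP : IsUFactor P C) : (Wᵀ * C).trace ≤ (Pᵀ * C).trace := by
  obtain ⟨hP1, H, hH, rfl⟩ := hP
  have hW' : Wᵀ * W = 1 := hW
  have hP' : Pᵀ * P = 1 := hP1
  have hHt : Hᵀ = H := by simpa using hH.isHermitian.eq
  have h0 : 0 ≤ ((W - P) * H * (W - P)ᵀ).trace := by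
    simpa using (hH.mul_mul_conjTranspose_same (W - P)).trace_nonneg
  have e1 : (W * H * Wᵀ).trace = H.trace := by
    rw [trace_mul_comm, ← Matrix.mul_assoc, hW', Matrix.one_mul]
  have e2 : (P * H * Pᵀ).trace = H.trace := by
    rw [trace_mul_comm, ← Matrix.mul_assoc, hP', Matrix.one_mul]
  have e3 : (P * H * Wᵀ).trace = (Wᵀ * (P * H)).trace := trace_mul_comm _ _
  have e4 : (W * H * Pᵀ).trace = (P * H * Wᵀ).trace := by
    rw [← trace_transpose]
    simp [transpose_mul, hHt, Matrix.mul_assoc]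
  have e5 : (Pᵀ * (P * H)).trace = H.trace := by
    rw [← Matrix.mul_assoc, hP', Matrix.one_mul]
  simp only [transpose_sub, Matrix.sub_mul, Matrix.mul_sub, trace_sub] at h0
  linarith

theorem frobInner_eq_sum {m n : ℕ} (A B : Matrix (Fin m) (Fin n) ℝ) :
    frobInner A B = ∑ i, ∑ j, A i j * B i j := by
  simp only [frobInner, trace, diag, mul_apply, transpose_apply]
  exact Finset.sum_comm

theorem frobInner_sgnMatrix {m n : ℕ} (V : Matrix (Fin m) (Fin n) ℝ) :
    frobInner V (sgnMatrix V) = entryL1 V := by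
  rw [frobInner_eq_sum]
  refine Finset.sum_congr rfl fun i _ => Finset.sum_congr rfl fun j _ => ?_
  rcases lt_trichotomy (V i j) 0 with h | h | h
  · simp [sgnMatrix, Real.sign_of_neg h, abs_of_neg h]
  · simp [h]
  · simp [sgnMatrix, Real.sign_of_pos h, abs_of_pos h]

theorem frobInner_le_entryL1 {m n : ℕ} (V W : Matrix (Fin m) (Fin n) ℝ) :
    frobInner V (sgnMatrix W) ≤ entryL1 V := by
  rw [frobInner_eq_sum]
  refine Finset.sum_le_sum fun i _ => Finset.sum_le_sum fun j _ => ?_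
  rcases Real.sign_apply_eq (W i j) with h | h | h
  · simp [sgnMatrix, h, neg_le_abs]
  · simp [sgnMatrix, h]
  · simp [sgnMatrix, h, le_abs_self]

theorem frobInner_transpose_mul {d n K : ℕ} (X : Matrix (Fin d) (Fin n) ℝ)
    (W : Matrix (Fin d) (Fin K) ℝ) (T : Matrix (Fin n) (Fin K) ℝ) :
    frobInner (Xᵀ * W) T = (Wᵀ * (X * T)).trace := by
  simp [frobInner, transpose_mul, Matrix.mul_assoc]

theorem finite_range_sgnMatrix (m n : ℕ) :
    (Set.range (sgnMatrix : Matrix (Fin m) (Fin n) ℝ → _)).Finite := by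
  have h : (Set.univ.pi fun _ : Fin m => Set.univ.pi fun _ : Fin n =>
      ({-1, 0, 1} : Set ℝ)).Finite :=
    Set.Finite.pi fun _ => Set.Finite.pi fun _ => Set.toFinite _
  refine h.subset ?_
  rintro _ ⟨V, rfl⟩ i - j -
  exact Real.sign_apply_eq (V i j)

theorem eventually_const_of_finite_range {f : ℕ → ℝ} (hf : Monotone f)
    (hfin : (Set.range f).Finite) : ∃ N, ∀ k, N ≤ k → f k = f N := by
  obtain ⟨_, ⟨N, rfl⟩, hN⟩ :=
    Set.exists_max_image (Set.range f) id hfin (Set.range_nonempty f)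
  exact ⟨N, fun k hk => le_antisymm (hN _ ⟨k, rfl⟩) (hf hk)⟩

theorem exists_pos_le_of_lt (a : ℕ → ℝ) (N : ℕ) :
    ∃ τ : ℝ, 0 < τ ∧ ∀ k < N, 0 < a k → τ ≤ a k := by
  induction N with
  | zero => exact ⟨1, one_pos, by simp⟩
  | succ N ih =>
    obtain ⟨τ, hτ, h⟩ := ih
    by_cases hN : 0 < a N
    · refine ⟨min τ (a N), lt_min hτ hN, fun k hk hak => ?_⟩
      rcases Nat.lt_succ_iff_lt_or_eq.mp hk with hk | rfl
      · exact (min_le_left _ _).trans (h k hk hak)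
      · exact min_le_right _ _
    · refine ⟨τ, hτ, fun k hk hak => ?_⟩
      rcases Nat.lt_succ_iff_lt_or_eq.mp hk with hk | rfl
      · exact h k hk hak
      · exact absurd hak hN

/-- item 2 of Theorem 3.7 — there is a constant τ₀ > 0 such that the
objective value of the non-greedy algorithm is fixed after at most ⌈F^max/τ₀⌉ steps,
and each strict increase of the objective value is by at least τ₀. -/
theorem nga_objective_fixed_in_finite_steps {d n K : ℕ} (hK : 1 ≤ K) (hKd : K ≤ d)
    (X : Matrix (Fin d) (Fin n) ℝ)
    (p : Matrix (Fin d) (Fin K) ℝ → Matrix (Fin d) (Fin K) ℝ)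
    (hp : ∀ C, IsUFactor (p C) C)
    (U : ℕ → Matrix (Fin d) (Fin K) ℝ) (S : ℕ → Matrix (Fin n) (Fin K) ℝ)
    (hU0 : U 0 ∈ Stiefel d K)
    (hS : ∀ k, S k = sgnMatrix (Xᵀ * U k))
    (hU : ∀ k, U (k + 1) = p (X * S k))
    (hF0 : 0 < frobInner (Xᵀ * U 0) (S 0))
    (Fmax : ℝ)
    (hFmax : IsGreatest {v : ℝ | ∃ W ∈ Stiefel d K, entryL1 (Xᵀ * W) = v} Fmax) :
    ∃ τ₀ : ℝ, 0 < τ₀ ∧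
      (∀ k, (⌈Fmax / τ₀⌉₊ : ℕ) ≤ k →
        frobInner (Xᵀ * U k) (S k) =
          frobInner (Xᵀ * U ⌈Fmax / τ₀⌉₊) (S ⌈Fmax / τ₀⌉₊)) ∧
      (∀ k, frobInner (Xᵀ * U (k + 1)) (S (k + 1)) ≠ frobInner (Xᵀ * U k) (S k) →
        τ₀ ≤ frobInner (Xᵀ * U (k + 1)) (S (k + 1)) - frobInner (Xᵀ * U k) (S k)) := by
  have hSt : ∀ k, U k ∈ Stiefel d K := by
    rintro (_ | k)
    · exact hU0
    · rw [hU]; exact (hp _).1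
  set f : ℕ → ℝ := fun k => frobInner (Xᵀ * U k) (S k) with hf
  have hfL : ∀ k, f k = entryL1 (Xᵀ * U k) := fun k => by
    simp only [hf, hS]; exact frobInner_sgnMatrix _
  have hmono : Monotone f := by
    refine monotone_nat_of_le_succ fun k => ?_
    calc f k = ((U k)ᵀ * (X * S k)).trace := frobInner_transpose_mul _ _ _
      _ ≤ ((U (k + 1))ᵀ * (X * S k)).trace := by
        rw [hU k]; exact trace_le_of_isUFactor (hSt k) (hp _)
      _ = frobInner (Xᵀ * U (k + 1)) (S k) := (frobInner_transpose_mul _ _ _).symm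
      _ ≤ entryL1 (Xᵀ * U (k + 1)) := by rw [hS k]; exact frobInner_le_entryL1 _ _
      _ = f (k + 1) := (hfL _).symm
  have hfin : (Set.range f).Finite := by
    -- for `k ≥ 1` the value `f k` is determined by the sign matrix `S (k - 1)`
    refine (((finite_range_sgnMatrix n K).image
      fun T => entryL1 (Xᵀ * p (X * T))).insert (f 0)).subset ?_
    rintro _ ⟨_ | k, rfl⟩
    · exact Set.mem_insert _ _
    · refine Set.mem_insert_of_mem _ ⟨S k, ⟨_, (hS k).symm⟩, ?_⟩
      rw [hfL, hU]
  obtain ⟨N, hN⟩ := eventually_const_of_finite_range hmono hfin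
  obtain ⟨τ, hτ, hτle⟩ := exists_pos_le_of_lt (fun k => f (k + 1) - f k) N
  have hFpos : 0 < Fmax := by
    have h0 : 0 < f 0 := hF0
    rw [hfL] at h0
    exact h0.trans_le (hFmax.2 ⟨U 0, hU0, rfl⟩)
  have hN1 : (0 : ℝ) < N + 1 := by positivity
  have hτ₀ : 0 < min τ (Fmax / (N + 1)) := lt_min hτ (div_pos hFpos hN1)
  have hceil : N ≤ ⌈Fmax / min τ (Fmax / (N + 1))⌉₊ := by
    have h1 : (N : ℝ) + 1 ≤ Fmax / min τ (Fmax / (N + 1)) := by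
      rw [le_div_iff₀ hτ₀, mul_comm, ← le_div_iff₀ hN1]
      exact min_le_right _ _
    have h2 : (N : ℝ) ≤ ⌈Fmax / min τ (Fmax / (N + 1))⌉₊ := by
      linarith [Nat.le_ceil (Fmax / min τ (Fmax / (N + 1)))]
    exact_mod_cast h2
  refine ⟨min τ (Fmax / (N + 1)), hτ₀, fun k hk => ?_, fun k hk => ?_⟩
  · exact (hN k (hceil.trans hk)).trans (hN _ hceil).symm
  · have hkN : k < N := by
      by_contra! h
      exact hk ((hN (k + 1) (by omega)).trans (hN k h).symm)
    have hlt : f k < f (k + 1) := lt_of_le_of_ne (hmono k.le_succ) (Ne.symm hk)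
    exact (min_le_left _ _).trans (hτle k hkN (sub_pos.mpr hlt))
end
end
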